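/- For every integer r ≥ 1 and all natural numbers m ≥ n ≥ 0, the number of ballot paths to (n,m) avoiding r consecutive E-steps satisfies (m+1) · s_n(m;r) = (m-n+1) · ⟨m+1 choose n⟩_r. -/

import Mathlib

/-- A word in steps `N = true` (up, `(0,1)`) and `E = false` (right, `(1,0)`) is a
ballot word when every prefix has at least as many `N`-steps as `E`-steps,
i.e. the corresponding lattice path from `(0,0)` stays weakly above `y = x`. -/
def IsBallot (p : List Bool) : Prop :=
  ∀ q : List Bool, q <+: p → q.count false ≤ q.count true

/-- `sCount r n m` is the number of ballot paths from `(0,0)` to `(n,m)`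
(with `n` east-steps and `m` north-steps, staying weakly above `y = x`)
containing no `r` consecutive east-steps. -/
noncomputable def sCount (r n m : ℕ) : ℕ :=
  Set.ncard {p : List Bool |
    p.count false = n ∧ p.count true = m ∧ IsBallot p ∧ ¬ List.replicate r false <:+: p}

/-- The Euler coefficient `⟨n choose k⟩_r`: the coefficient of `t^k` in the
polynomial `(1 + t + t^2 + ⋯ + t^(r-1))^n`, viewed as an integer. -/
noncomputable def eulerCoeff (r n k : ℕ) : ℤ :=
  ((∑ i ∈ Finset.range r, (Polynomial.X : Polynomial ℤ) ^ i) ^ n).coeff k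

theorem exists_last_run (p : List Bool) (h : true ∈ p) :
    ∃ p' j, p = p' ++ true :: List.replicate j false := by
  induction p using List.reverseRecOn with
  | nil => simp at h
  | append_singleton l a ih =>
    cases a with
    | true => exact ⟨l, 0, by simp⟩
    | false =>
      have h' : true ∈ l := by simpa using h
      obtain ⟨p', j, rfl⟩ := ih h'
      exact ⟨p', j + 1, by simp [List.replicate_succ']⟩

theorem last_run_inj_aux (i : ℕ) : ∀ (j : ℕ) (a b : List Bool),
    List.replicate i false ++ true :: a = List.replicate j false ++ true :: b → i = j ∧ a = b := by
  induction i with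
  | zero =>
    intro j a b h
    cases j with
    | zero => simpa using h
    | succ j => simp [List.replicate_succ] at h
  | succ i ih =>
    intro j a b h
    cases j with
    | zero => simp [List.replicate_succ] at h
    | succ j =>
      have := ih j a b (by simpa [List.replicate_succ] using h)
      exact ⟨by omega, this.2⟩

theorem last_run_inj (i j : ℕ) (a b : List Bool)
    (h : a ++ true :: List.replicate i false = b ++ true :: List.replicate j false) :
    i = j ∧ a = b := by
  have := congrArg List.reverse h
  have := last_run_inj_aux i j a.reverse b.reverse (by simpa using this)
  exact ⟨this.1, List.reverse_injective this.2⟩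

def sSet (r n m : ℕ) : Set (List Bool) :=
  {p : List Bool |
    p.count false = n ∧ p.count true = m ∧ IsBallot p ∧ ¬ List.replicate r false <:+: p}

theorem sSet_finite (r n m : ℕ) : (sSet r n m).Finite := by
  refine (List.finite_length_eq Bool (n + m)).subset ?_
  rintro p ⟨h1, h2, -⟩
  have := List.count_false_add_count_true p
  simp only [Set.mem_ofPred_eq]
  omega

theorem no_run (r j : ℕ) (hr : 1 ≤ r) (hj : j < r) (p : List Bool)
    (hp : ¬ List.replicate r false <:+: p) :
    ¬ List.replicate r false <:+: p ++ true :: List.replicate j false := by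
  intro h
  rw [List.infix_append_iff] at h
  rcases h with h | h | ⟨l1, l2, h, h1, h2⟩
  · exact hp h
  · rw [List.infix_cons_iff] at h
    rcases h with h | h
    · obtain ⟨s, rfl⟩ : ∃ s, r = s + 1 := ⟨r - 1, by omega⟩
      simp [List.replicate_succ] at h
    · have := h.length_le
      simp at this
      omega
  · cases l2 with
    | nil => apply hp; rw [h]; simpa using h1.isInfix
    | cons x t =>
      have hx : x ∈ List.replicate r false := by rw [h]; simp
      have := List.eq_of_mem_replicate hx
      subst this
      simp at h2

theorem ballot_ext (j : ℕ) (p : List Bool) (hp : IsBallot p)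
    (hc : p.count false + j ≤ p.count true + 1) :
    IsBallot (p ++ true :: List.replicate j false) := by
  intro q hq
  rcases List.prefix_or_prefix_of_prefix hq (List.prefix_append p _) with hq' | ⟨t, rfl⟩
  · exact hp q hq'
  · have ht := (List.prefix_append_right_inj p).1 hq
    have h0 := hp p (List.prefix_refl p)
    cases t with
    | nil => simpa using h0
    | cons x t =>
      rw [List.cons_prefix_cons] at ht
      obtain ⟨rfl, ht⟩ := ht
      have := ht.sublist.count_le false
      simp at this
      simp
      omega

theorem mem_step (r n m : ℕ) (hr : 1 ≤ r) (h : n ≤ m + 1) (p : List Bool) :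
    p ∈ sSet r n (m + 1) ↔ ∃ j, (j < r ∧ j ≤ n) ∧ ∃ p' ∈ sSet r (n - j) m,
      p' ++ true :: List.replicate j false = p := by
  constructor
  · rintro ⟨h1, h2, h3, h4⟩
    obtain ⟨p', j, rfl⟩ := exists_last_run p (by
      rw [← List.count_pos_iff]; omega)
    simp [List.count_replicate] at h1 h2
    refine ⟨j, ⟨?_, by omega⟩, p', ⟨by omega, by omega, ?_, ?_⟩, rfl⟩
    · by_contra hj
      apply h4
      refine List.IsInfix.trans ?_ (List.suffix_append p' _).isInfix
      refine List.IsInfix.trans ?_ (List.suffix_cons true _).isInfix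
      refine ⟨[], List.replicate (j - r) false, ?_⟩
      simp
      omega
    · intro q hq
      exact h3 q (hq.trans (List.prefix_append _ _))
    · intro hq
      exact h4 (hq.trans (List.prefix_append _ _).isInfix)
  · rintro ⟨j, ⟨hj, hjn⟩, p', ⟨h1, h2, h3, h4⟩, rfl⟩
    refine ⟨by simp; omega, by simp [List.count_replicate]; omega, ballot_ext j p' h3 (by omega), no_run r j hr hj p' h4⟩

theorem sCount_step (r n m : ℕ) (hr : 1 ≤ r) (h : n ≤ m + 1) :
    sCount r n (m + 1) = ∑ j ∈ Finset.range r, if j ≤ n then sCount r (n - j) m else 0 := by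
  have key : ∀ a b, sCount r a b = (sSet_finite r a b).toFinset.card := fun a b =>
    Set.ncard_eq_toFinset_card _ (sSet_finite r a b)
  simp only [key]
  rw [← Finset.sum_filter]
  have : (sSet_finite r n (m+1)).toFinset = ((Finset.range r).filter (fun j => j ≤ n)).biUnion
      (fun j => (sSet_finite r (n - j) m).toFinset.image
        (fun p' => p' ++ true :: List.replicate j false)) := by
    ext p
    simp only [Set.Finite.mem_toFinset, Finset.mem_biUnion, Finset.mem_filter, Finset.mem_range,
      Finset.mem_image]
    exact mem_step r n m hr h p
  rw [this, Finset.card_biUnion]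
  · refine Finset.sum_congr rfl fun j _ => ?_
    exact Finset.card_image_of_injective _ fun a b hab => (last_run_inj j j a b hab).2
  · intro i _ j _ hij
    simp only [Function.onFun]
    rw [Finset.disjoint_left]
    intro p hp hp'
    simp only [Finset.mem_image] at hp hp'
    obtain ⟨a, -, rfl⟩ := hp
    obtain ⟨b, -, hb⟩ := hp'
    exact hij (last_run_inj j i b a hb).1.symm

theorem sCount_lt (r n m : ℕ) (h : m < n) : sCount r n m = 0 := by
  have : sSet r n m = ∅ := by
    ext p
    simp only [Set.mem_empty_iff_false, iff_false]
    rintro ⟨h1, h2, h3, -⟩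
    have := h3 p (List.prefix_refl p)
    omega
  change (sSet r n m).ncard = 0
  rw [this, Set.ncard_empty]

theorem sCount_zero (r : ℕ) (hr : 1 ≤ r) : sCount r 0 0 = 1 := by
  have : sSet r 0 0 = {[]} := by
    ext p
    simp only [Set.mem_singleton_iff]
    constructor
    · rintro ⟨h1, h2, -⟩
      have := List.count_false_add_count_true p
      exact List.length_eq_zero_iff.mp (by omega)
    · rintro rfl
      refine ⟨rfl, rfl, ?_, ?_⟩
      · intro q hq
        simp at hq
        simp [hq]
      · simp
        omega
  change (sSet r 0 0).ncard = 1
  rw [this, Set.ncard_singleton]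

theorem euler_step (r n m : ℕ) :
    eulerCoeff r (m + 1) n =
      ∑ j ∈ Finset.range r, if j ≤ n then eulerCoeff r m (n - j) else 0 := by
  unfold eulerCoeff
  rw [pow_succ', Finset.sum_mul, Polynomial.finsetSum_coeff]
  simp only [Polynomial.coeff_X_pow_mul']

theorem euler_deriv (r n m : ℕ) :
    (n : ℤ) * eulerCoeff r (m + 1) n =
      (m + 1) * ∑ j ∈ Finset.range r, if j ≤ n then (j : ℤ) * eulerCoeff r m (n - j) else 0 := by
  unfold eulerCoeff
  set P : Polynomial ℤ := ∑ i ∈ Finset.range r, (Polynomial.X : Polynomial ℤ) ^ i with hP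
  have h1 : ∀ Q : Polynomial ℤ, (Polynomial.X * Polynomial.derivative Q).coeff n
      = n * Q.coeff n := by
    intro Q
    cases n with
    | zero => simp
    | succ k => rw [Polynomial.coeff_X_mul, Polynomial.coeff_derivative]; push_cast; ring
  have h2 : Polynomial.X * Polynomial.derivative P
      = ∑ j ∈ Finset.range r, Polynomial.C (j : ℤ) * Polynomial.X ^ j := by
    rw [hP, Polynomial.derivative_sum, Finset.mul_sum]
    refine Finset.sum_congr rfl fun j _ => ?_
    cases j with
    | zero => simp
    | succ k => rw [Polynomial.derivative_X_pow]; simp; ring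
  rw [← h1, Polynomial.derivative_pow_succ]
  have h3 : Polynomial.X * (Polynomial.C ((m : ℤ) + 1) * P ^ m * Polynomial.derivative P)
      = Polynomial.C ((m : ℤ) + 1) *
        ∑ j ∈ Finset.range r, Polynomial.C (j : ℤ) * (Polynomial.X ^ j * P ^ m) := by
    calc _ = Polynomial.C ((m : ℤ) + 1) * ((Polynomial.X * Polynomial.derivative P) * P ^ m) := by
          ring
      _ = _ := by rw [h2, Finset.sum_mul]; simp only [mul_assoc]
  rw [h3, Polynomial.coeff_C_mul, Polynomial.finsetSum_coeff]
  simp only [Polynomial.coeff_C_mul, Polynomial.coeff_X_pow_mul', mul_ite, mul_zero]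

theorem sCount_eq_euler (r : ℕ) (hr : 1 ≤ r) (n m : ℕ) (h : n ≤ m) :
    ((m : ℤ) + 1) * sCount r n m = ((m : ℤ) - n + 1) * eulerCoeff r (m + 1) n := by
  induction m generalizing n with
  | zero =>
    obtain rfl : n = 0 := by omega
    rw [sCount_zero r hr]
    have : eulerCoeff r 1 0 = 1 := by
      rw [euler_step]
      simp [eulerCoeff]
      omega
    simp [this]
  | succ m ih =>
    have hm : ((m : ℤ) + 1) ≠ 0 := by positivity
    apply mul_left_cancel₀ hm
    have e1 := euler_step r n (m + 1)
    have e2 := euler_deriv r n (m + 1)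
    have e3 : ((m : ℤ) + 1) * sCount r n (m + 1) =
        ((m : ℤ) - n + 1) * eulerCoeff r (m + 1 + 1) n +
        ∑ j ∈ Finset.range r,
          if j ≤ n then (j : ℤ) * eulerCoeff r (m + 1) (n - j) else 0 := by
      rw [sCount_step r n m hr h, e1, Nat.cast_sum, Finset.mul_sum, Finset.mul_sum,
        ← Finset.sum_add_distrib]
      refine Finset.sum_congr rfl fun j _ => ?_
      split_ifs with hj
      · by_cases hle : n - j ≤ m
        · rw [ih (n - j) hle, Nat.cast_sub hj]
          ring
        · obtain rfl : n = m + 1 := by omega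
          obtain rfl : j = 0 := by omega
          rw [sCount_lt r _ _ (by omega)]
          push_cast
          ring
      · simp
    push_cast at e2 ⊢
    linear_combination ((m : ℤ) + 2) * e3 - e2
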